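/- arXiv:1805.02412 — 2 statements merged into one kernel-verified Lean document; each statement's English description precedes it below -/
import Mathlib

section
/- Let G be a finite simple chordal graph that is P_9-free, IR an irredundant set of G, A ∈ D_RN(G), and I ⊆ IR. Then A ∪ I is a minimal dominating set of G (i.e., I is an irredundant extension of A) if and only if for every irredundant component C_i of G, the set D_i = I ∩ C_i is inclusion-minimal among the subsets D of C_i satisfying both: D dominates C_i \ N(A), and D does not dominate Priv_IR(A,x) for any x ∈ R_i(A). -/
variable {V : Type*}

/-- The closed neighborhood `N[x]` of a vertex. -/
def cnbr (G : SimpleGraph V) (x : V) : Set V := insert x (G.neighborSet x)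

/-- `N[X] = ⋃ x ∈ X, N[x]`. -/
def cnbrSet (G : SimpleGraph V) (X : Set V) : Set V := ⋃ x ∈ X, cnbr G x

/-- `N(X) = N[X] \ X`. -/
def onbrSet (G : SimpleGraph V) (X : Set V) : Set V := cnbrSet G X \ X

/-- `D` dominates `X` if `X ⊆ N[D]`. -/
def Dominates (G : SimpleGraph V) (D X : Set V) : Prop := X ⊆ cnbrSet G D

/-- `D` is a minimal dominating set of `G`. -/
def IsMinDomSet (G : SimpleGraph V) (D : Set V) : Prop :=
  Dominates G D Set.univ ∧ ∀ D' : Set V, D' ⊂ D → ¬ Dominates G D' Set.univ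

/-- `Priv(D, x)`: private neighbors of `x` w.r.t. `D`. -/
def priv (G : SimpleGraph V) (D : Set V) (x : V) : Set V := {u | cnbr G u ∩ D = {x}}

/-- `IR` is an irredundant set of `G`. -/
def IsIrredundantSet (G : SimpleGraph V) (IR : Set V) : Prop :=
  (∀ v : V, ∃ x ∈ IR, cnbr G x ⊆ cnbr G v) ∧
  (∀ x ∈ IR, ∀ v : V, ¬ cnbr G v ⊂ cnbr G x) ∧
  (∀ x ∈ IR, ∀ y ∈ IR, x ≠ y → cnbr G x ≠ cnbr G y)

/-- `Priv_IR(D, x) = Priv(D, x) ∩ IR`. -/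
def privIR (G : SimpleGraph V) (IR D : Set V) (x : V) : Set V := priv G D x ∩ IR

/-- `A ∈ D_RN(G)`: `A` is the intersection of a minimal dominating set with `RN = V \ IR`. -/
def memDRN (G : SimpleGraph V) (IR A : Set V) : Prop :=
  ∃ D : Set V, IsMinDomSet G D ∧ A = D ∩ IRᶜ

/-- `G` is `P_k`-free: it has no induced path on `k` vertices. -/
def PkFree (G : SimpleGraph V) (k : ℕ) : Prop :=
  ¬ ∃ f : Fin k → V, Function.Injective f ∧
      ∀ i j : Fin k, G.Adj (f i) (f j) ↔ (i.val + 1 = j.val ∨ j.val + 1 = i.val)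

/-- `G` is chordal: no induced cycle on `n ≥ 4` vertices. -/
def Chordal (G : SimpleGraph V) : Prop :=
  ∀ n : ℕ, 4 ≤ n → ¬ ∃ f : ZMod n → V, Function.Injective f ∧
      ∀ i j : ZMod n, G.Adj (f i) (f j) ↔ (i = j + 1 ∨ j = i + 1)

/-- `C` is a connected component of the subgraph of `G` induced by `S`. -/
def IsCompOf (G : SimpleGraph V) (S C : Set V) : Prop :=
  C ⊆ S ∧ C.Nonempty ∧ (G.induce C).Connected ∧
    ∀ x ∈ C, ∀ y ∈ S, G.Adj x y → y ∈ C

/-- `B(A)`: the elements of `A` having an irredundant private neighbor in some irredundant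
component entirely contained in `N(A)`. -/
def Bset (G : SimpleGraph V) (IR A : Set V) : Set V :=
  {a ∈ A | ∃ C : Set V, IsCompOf G IR C ∧ C ⊆ onbrSet G A ∧ (privIR G IR A a ∩ C).Nonempty}

/-- Domination inside the subgraph induced by `C`: every `u ∈ X` equals, or is adjacent
(within `C`) to, some `d ∈ D`.  For `D, X ⊆ C` this is domination in `G[C]`. -/
def domIn (G : SimpleGraph V) (C D X : Set V) : Prop :=
  ∀ u ∈ X, ∃ d ∈ D, u = d ∨ (G.Adj d u ∧ d ∈ C ∧ u ∈ C)


theorem mem_cn (G : SimpleGraph V) (x v : V) : v ∈ cnbr G x ↔ v = x ∨ G.Adj x v := by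
  simp [cnbr]

theorem cn_symm {G : SimpleGraph V} {x v : V} (h : v ∈ cnbr G x) : x ∈ cnbr G v := by
  rw [mem_cn] at *
  rcases h with h | h
  · exact Or.inl h.symm
  · exact Or.inr h.symm

theorem mem_cnS (G : SimpleGraph V) (X : Set V) (v : V) :
    v ∈ cnbrSet G X ↔ ∃ x ∈ X, v ∈ cnbr G x := by
  simp [cnbrSet]

theorem mem_privIR_iff (G : SimpleGraph V) (IR D : Set V) (x u : V) :
    u ∈ privIR G IR D x ↔ u ∈ IR ∧ x ∈ D ∧ u ∈ cnbr G x ∧ ∀ d ∈ D, u ∈ cnbr G d → d = x := by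
  constructor
  · rintro ⟨h, hu⟩
    have h' : cnbr G u ∩ D = {x} := h
    have hx : x ∈ cnbr G u ∩ D := by rw [h']; rfl
    refine ⟨hu, hx.2, cn_symm hx.1, fun d hd hud => ?_⟩
    have : d ∈ cnbr G u ∩ D := ⟨cn_symm hud, hd⟩
    rw [h'] at this
    exact this
  · rintro ⟨hu, hx, hux, h⟩
    refine ⟨?_, hu⟩
    change cnbr G u ∩ D = {x}
    ext d
    constructor
    · rintro ⟨h1, h2⟩
      exact h d h2 (cn_symm h1)
    · rintro rfl
      exact ⟨cn_symm hux, hx⟩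

theorem minDom_iff {G : SimpleGraph V} {IR : Set V} (hIR : IsIrredundantSet G IR) (D : Set V) :
    IsMinDomSet G D ↔ (∀ v ∈ IR, ∃ d ∈ D, v ∈ cnbr G d) ∧
      ∀ x ∈ D, (privIR G IR D x).Nonempty := by
  have dom : ∀ D : Set V, Dominates G D Set.univ ↔ ∀ v ∈ IR, ∃ d ∈ D, v ∈ cnbr G d := by
    intro D
    constructor
    · intro h v _
      exact (mem_cnS G D v).1 (h (Set.mem_univ v))
    · intro h v _
      obtain ⟨y, hy, hyv⟩ := hIR.1 v
      obtain ⟨d, hd, hyd⟩ := h y hy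
      exact (mem_cnS G D v).2 ⟨d, hd, cn_symm (hyv (cn_symm hyd))⟩
  constructor
  · rintro ⟨h1, h2⟩
    rw [dom] at h1
    refine ⟨h1, fun x hx => ?_⟩
    have h3 := h2 (D \ {x}) ⟨Set.diff_subset, fun h => (h hx).2 rfl⟩
    rw [dom] at h3
    push Not at h3
    obtain ⟨u, hu, h⟩ := h3
    have key : ∀ d ∈ D, u ∈ cnbr G d → d = x := by
      intro d hd hud
      by_contra hne
      exact h d ⟨hd, hne⟩ hud
    obtain ⟨d, hd, hud⟩ := h1 u hu
    have hdx := key d hd hud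
    subst hdx
    exact ⟨u, (mem_privIR_iff _ _ _ _ _).2 ⟨hu, hd, hud, key⟩⟩
  · rintro ⟨h1, h2⟩
    refine ⟨(dom D).2 h1, fun D' hD' h => ?_⟩
    obtain ⟨x, hx, hx'⟩ := Set.exists_of_ssubset hD'
    obtain ⟨u, hu⟩ := h2 x hx
    rw [mem_privIR_iff] at hu
    obtain ⟨d, hd, hud⟩ := (dom D').1 h u hu.1
    exact hx' (hu.2.2.2 d (hD'.1 hd) hud ▸ hd)

/-- In a chordal graph a walk without short chords is an induced path. -/
theorem induced_of_local {G : SimpleGraph V} (hch : Chordal G) (f : ℕ → V) (N : ℕ)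
    (h1 : ∀ i, i + 1 ≤ N → G.Adj (f i) (f (i + 1)))
    (h2 : ∀ i, i + 2 ≤ N → ¬ G.Adj (f i) (f (i + 2)) ∧ f i ≠ f (i + 2)) :
    ∀ d, 2 ≤ d → ∀ i, i + d ≤ N → ¬ G.Adj (f i) (f (i + d)) ∧ f i ≠ f (i + d) := by
  intro d
  induction d using Nat.strong_induction_on with
  | _ d ih =>
    intro hd i hi
    rcases Nat.eq_or_lt_of_le hd with rfl | hd3
    · exact h2 i hi
    have hne : f i ≠ f (i + d) := by
      intro he
      have ha := h1 (i + (d - 1)) (by omega)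
      rw [show i + (d - 1) + 1 = i + d by omega, ← he] at ha
      exact (ih (d - 1) (by omega) (by omega) i (by omega)).1 ha.symm
    refine ⟨fun hadj => ?_, hne⟩
    have nadj : ∀ a b, a ≤ d → b ≤ d → a + 2 ≤ b → ¬ (a = 0 ∧ b = d) →
        ¬ G.Adj (f (i + a)) (f (i + b)) ∧ f (i + a) ≠ f (i + b) := by
      intro a b ha hb hab hn
      have := ih (b - a) (by omega) (by omega) (i + a) (by omega)
      rwa [show i + a + (b - a) = i + b by omega] at this
    have adj1 : ∀ a, a + 1 ≤ d → G.Adj (f (i + a)) (f (i + (a + 1))) := by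
      intro a ha
      exact h1 (i + a) (by omega)
    have ne : ∀ a b, a ≤ d → b ≤ d → a < b → f (i + a) ≠ f (i + b) := by
      intro a b ha hb hab
      rcases Nat.eq_or_lt_of_le (Nat.succ_le_of_lt hab) with h | h
      · subst h
        exact (adj1 a (by omega)).ne
      · by_cases hn : a = 0 ∧ b = d
        · obtain ⟨rfl, rfl⟩ := hn
          exact hne
        · exact (nadj a b ha hb h hn).2
    have adjiff : ∀ a b, a ≤ d → b ≤ d → a < b →
        (G.Adj (f (i + a)) (f (i + b)) ↔ b = a + 1 ∨ (a = 0 ∧ b = d)) := by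
      intro a b ha hb hab
      constructor
      · intro h
        by_contra hc
        push Not at hc
        exact (nadj a b ha hb (by omega) (by omega)).1 h
      · rintro (rfl | ⟨rfl, rfl⟩)
        · exact adj1 a hb
        · exact hadj
    have : NeZero (d + 1) := ⟨by omega⟩
    have : Fact (1 < d + 1) := ⟨by omega⟩
    have lt : ∀ k : ZMod (d + 1), k.val ≤ d := fun k => Nat.le_of_lt_succ (ZMod.val_lt k)
    have succ_iff : ∀ k l : ZMod (d + 1), k = l + 1 ↔
        (k.val = l.val + 1 ∨ (k.val = 0 ∧ l.val = d)) := by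
      intro k l
      have hk := lt k
      have hl := lt l
      rw [← (ZMod.val_injective (d + 1)).eq_iff, ZMod.val_add, ZMod.val_one]
      rcases Nat.eq_or_lt_of_le hl with h | h
      · rw [h, Nat.mod_self]; omega
      · rw [Nat.mod_eq_of_lt (by omega)]; omega
    refine hch (d + 1) (by omega) ⟨fun k => f (i + k.val), ?_, ?_⟩
    · intro k l hkl
      apply ZMod.val_injective (d + 1)
      rcases lt_trichotomy k.val l.val with h | h | h
      · exact absurd hkl (ne _ _ (lt k) (lt l) h)
      · exact h
      · exact absurd hkl.symm (ne _ _ (lt l) (lt k) h)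
    · intro k l
      have hk := lt k
      have hl := lt l
      rw [succ_iff, succ_iff]
      change G.Adj (f (i + k.val)) (f (i + l.val)) ↔ _
      rcases lt_trichotomy k.val l.val with h | h | h
      · rw [adjiff _ _ hk hl h]; omega
      · rw [h]
        simp only [SimpleGraph.irrefl, false_iff]
        omega
      · rw [SimpleGraph.adj_comm, adjiff _ _ hl hk h]; omega

theorem conn_closure {G : SimpleGraph V} {C : Set V} (hC : (G.induce C).Connected) (P : V → Prop)
    (hP : ∀ x ∈ C, ∀ y ∈ C, G.Adj x y → P x → P y) {u : V} (hu : u ∈ C) (hPu : P u) :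
    ∀ y ∈ C, P y := by
  intro y hy
  have h := hC.preconnected ⟨u, hu⟩ ⟨y, hy⟩
  rw [SimpleGraph.reachable_iff_reflTransGen] at h
  have : ∀ z : C, Relation.ReflTransGen (G.induce C).Adj ⟨u, hu⟩ z → P z := by
    intro z hz
    induction hz with
    | refl => exact hPu
    | tail _ hbc ih => exact hP _ (Subtype.coe_prop _) _ (Subtype.coe_prop _) hbc ih
  exact this _ h

theorem comp_subset {G : SimpleGraph V} {S C C' : Set V} (h : IsCompOf G S C)
    (h' : IsCompOf G S C') {x : V} (hx : x ∈ C) (hx' : x ∈ C') : C ⊆ C' :=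
  conn_closure h.2.2.1 (· ∈ C') (fun a _ b hb hab haC => h'.2.2.2 a haC b (h.1 hb) hab) hx hx'

theorem exists_comp (G : SimpleGraph V) (S : Set V) {v : V} (hv : v ∈ S) :
    ∃ C, IsCompOf G S C ∧ v ∈ C := by
  let C : Set V := {y | Relation.ReflTransGen (fun x y => G.Adj x y ∧ y ∈ S) v y}
  have hvC : v ∈ C := Relation.ReflTransGen.refl
  have hcl : ∀ x ∈ C, ∀ y ∈ S, G.Adj x y → y ∈ C := fun x hx y hy hxy =>
    Relation.ReflTransGen.tail hx ⟨hxy, hy⟩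
  have hr : ∀ y, Relation.ReflTransGen (fun x y => G.Adj x y ∧ y ∈ S) v y →
      ∃ h : y ∈ C, (G.induce C).Reachable ⟨v, hvC⟩ ⟨y, h⟩ := by
    intro y hy
    induction hy with
    | refl => exact ⟨hvC, SimpleGraph.Reachable.refl _⟩
    | tail _ hbc ih =>
      obtain ⟨h, h'⟩ := ih
      refine ⟨hcl _ h _ hbc.2 hbc.1, h'.trans (SimpleGraph.Adj.reachable ?_)⟩
      exact hbc.1
  refine ⟨C, ⟨?_, ⟨v, hvC⟩, ?_, hcl⟩, hvC⟩
  · intro y hy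
    cases hy with
    | refl => exact hv
    | tail _ h => exact h.2
  · rw [SimpleGraph.connected_iff_exists_forall_reachable]
    exact ⟨⟨v, hvC⟩, fun w => (hr w.1 w.2).2⟩

/-- incomparability: neighbor `y` of the irredundant vertex `x`; if `y` irredundant too, then `y`
has a neighbor outside `N[x]`. -/
theorem exists_out {G : SimpleGraph V} {IR : Set V} (hIR : IsIrredundantSet G IR) {x y : V}
    (hx : x ∈ IR) (hy : y ∈ IR) (hxy : G.Adj x y) :
    ∃ z, G.Adj y z ∧ ¬ G.Adj x z ∧ x ≠ z := by
  have hn : ¬ cnbr G y ⊆ cnbr G x := by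
    intro h
    rcases h.eq_or_ssubset with h | h
    · exact hIR.2.2 y hy x hx hxy.ne' h
    · exact hIR.2.1 x hx y h
  obtain ⟨z, hz, hz'⟩ := Set.not_subset.1 hn
  rw [mem_cn] at hz hz'
  push Not at hz'
  rcases hz with rfl | hz
  · exact absurd hxy hz'.2
  · exact ⟨z, hz, hz'.2, hz'.1.symm⟩

theorem arm {G : SimpleGraph V} {IR C : Set V} (hIR : IsIrredundantSet G IR)
    (hC : IsCompOf G IR C) {a u w : V} (ha : a ∉ IR) (hu : u ∈ C) (hw : w ∈ C)
    (hau : G.Adj a u) (haw : ¬ G.Adj a w) :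
    ∃ p q y z, p ∈ C ∧ G.Adj a p ∧ G.Adj p q ∧ G.Adj q y ∧ G.Adj y z ∧
      (¬ G.Adj a q ∧ a ≠ q) ∧ (¬ G.Adj p y ∧ p ≠ y) ∧ (¬ G.Adj q z ∧ q ≠ z) := by
  obtain ⟨p, hp, q, hq, hpq, hap, haq⟩ :
      ∃ p ∈ C, ∃ q ∈ C, G.Adj p q ∧ G.Adj a p ∧ ¬ G.Adj a q := by
    by_contra hcon
    push Not at hcon
    exact haw (conn_closure hC.2.2.1 (G.Adj a) (fun x hx y hy h1 h2 => hcon x hx y hy h1 h2)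
      hu hau w hw)
  have haq' : a ≠ q := fun h => ha (h ▸ hC.1 hq)
  obtain ⟨z, hqz, hpz, hpz'⟩ := exists_out hIR (hC.1 hp) (hC.1 hq) hpq
  have mk : ∀ y, y ∈ IR → G.Adj q y → ¬ G.Adj p y → p ≠ y →
      ∃ p q y z, p ∈ C ∧ G.Adj a p ∧ G.Adj p q ∧ G.Adj q y ∧ G.Adj y z ∧
      (¬ G.Adj a q ∧ a ≠ q) ∧ (¬ G.Adj p y ∧ p ≠ y) ∧ (¬ G.Adj q z ∧ q ≠ z) := by
    intro y hy h1 h2 h3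
    obtain ⟨t, h4, h5⟩ := exists_out hIR (hC.1 hq) hy h1
    exact ⟨p, q, y, t, hp, hap, hpq, h1, h4, ⟨haq, haq'⟩, ⟨h2, h3⟩, h5⟩
  by_cases hz : z ∈ IR
  · exact mk z hz hqz hpz hpz'
  obtain ⟨y, hy, hyz⟩ := hIR.1 z
  have hzy : G.Adj z y := by
    rcases (mem_cn G z y).1 (hyz ((mem_cn G y y).2 (Or.inl rfl))) with h | h
    · exact absurd (h ▸ hy) hz
    · exact h
  have hpy : p ∉ cnbr G y := by
    intro h
    rcases (mem_cn G z p).1 (hyz h) with h | h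
    · exact hpz' h
    · exact hpz h.symm
  rw [mem_cn] at hpy
  push Not at hpy
  by_cases hqy : G.Adj q y
  · exact mk y hy hqy (fun h => hpy.2 h.symm) hpy.1
  · refine ⟨p, q, z, y, hp, hap, hpq, hqz, hzy, ⟨haq, haq'⟩, ⟨hpz, hpz'⟩, hqy, ?_⟩
    rintro rfl
    exact hpy.2 hpq.symm

theorem single_comp {G : SimpleGraph V} (hch : Chordal G) (hP9 : PkFree G 9) {IR C C' : Set V}
    (hIR : IsIrredundantSet G IR) (hC : IsCompOf G IR C) (hC' : IsCompOf G IR C')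
    {a u w u' w' : V} (ha : a ∉ IR) (hu : u ∈ C) (hw : w ∈ C) (hau : G.Adj a u)
    (haw : ¬ G.Adj a w) (hu' : u' ∈ C') (hw' : w' ∈ C') (hau' : G.Adj a u')
    (haw' : ¬ G.Adj a w') : C' ⊆ C := by
  obtain ⟨p, q, y, z, hp, h1, h2, h3, h4, h5, h6, h7⟩ := arm hIR hC ha hu hw hau haw
  obtain ⟨p', q', y', z', hp', h1', h2', h3', h4', h5', h6', h7'⟩ :=
    arm hIR hC' ha hu' hw' hau' haw'
  by_cases hpp : p' ∈ C
  · exact comp_subset hC' hC hp' hpp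
  exfalso
  have hn : ¬ G.Adj p p' := fun h => hpp (hC.2.2.2 p hp p' (hC'.1 hp') h)
  have hn' : p ≠ p' := fun h => hpp (h ▸ hp)
  let f : ℕ → V := fun n => match n with
    | 0 => z
    | 1 => y
    | 2 => q
    | 3 => p
    | 4 => a
    | 5 => p'
    | 6 => q'
    | 7 => y'
    | _ => z'
  have f1 : ∀ i, i + 1 ≤ 8 → G.Adj (f i) (f (i + 1)) := by
    intro i hi
    have : i < 8 := by omega
    interval_cases i
    · exact h4.symm
    · exact h3.symm
    · exact h2.symm
    · exact h1.symm
    · exact h1'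
    · exact h2'
    · exact h3'
    · exact h4'
  have f2 : ∀ i, i + 2 ≤ 8 → ¬ G.Adj (f i) (f (i + 2)) ∧ f i ≠ f (i + 2) := by
    intro i hi
    have : i < 7 := by omega
    interval_cases i
    · exact ⟨fun h => h7.1 h.symm, h7.2.symm⟩
    · exact ⟨fun h => h6.1 h.symm, h6.2.symm⟩
    · exact ⟨fun h => h5.1 h.symm, h5.2.symm⟩
    · exact ⟨hn, hn'⟩
    · exact h5'
    · exact h6'
    · exact h7'
  have key := induced_of_local hch f 8 f1 f2
  have K : ∀ i j, i ≤ 8 → j ≤ 8 → i < j →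
      ((G.Adj (f i) (f j) ↔ i + 1 = j) ∧ f i ≠ f j) := by
    intro i j hi hj hij
    rcases Nat.eq_or_lt_of_le (Nat.succ_le_of_lt hij) with h | h
    · subst h
      exact ⟨⟨fun _ => rfl, fun _ => f1 i hj⟩, (f1 i hj).ne⟩
    · have := key (j - i) (by omega) i (by omega)
      rw [show i + (j - i) = j by omega] at this
      exact ⟨⟨fun h => absurd h this.1, fun h => by omega⟩, this.2⟩
  refine hP9 ⟨fun i => f i.val, ?_, ?_⟩
  · intro i j hij
    apply Fin.ext
    rcases lt_trichotomy i.val j.val with h | h | h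
    · exact absurd hij (K _ _ (by omega) (by omega) h).2
    · exact h
    · exact absurd hij.symm (K _ _ (by omega) (by omega) h).2
  · intro i j
    change G.Adj (f i.val) (f j.val) ↔ _
    rcases lt_trichotomy i.val j.val with h | h | h
    · rw [(K _ _ (by omega) (by omega) h).1]; omega
    · rw [h]
      simp only [SimpleGraph.irrefl, false_iff]
      omega
    · rw [SimpleGraph.adj_comm, (K _ _ (by omega) (by omega) h).1]; omega

/-- In a `P₉`-free chordal graph, for `A ∈ D_RN(G)` and `I ⊆ IR`, the set
`A ∪ I` is a minimal dominating set iff for every irredundant component `C`, `I ∩ C` is an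
inclusion-minimal subset of `C` dominating `C \ N(A)` without dominating `Priv_IR(A, x)` for
any `x ∈ R_i(A)`. -/
theorem stmt_9 [Fintype V] (G : SimpleGraph V) (hch : Chordal G) (hP9 : PkFree G 9)
    (IR : Set V) (hIR : IsIrredundantSet G IR)
    (A : Set V) (hA : memDRN G IR A) (I : Set V) (hI : I ⊆ IR) :
    IsMinDomSet G (A ∪ I) ↔
      ∀ C : Set V, IsCompOf G IR C →
        (Dominates G (I ∩ C) (C \ onbrSet G A) ∧
          (∀ x ∈ A \ Bset G IR A, (privIR G IR A x ∩ C).Nonempty →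
            ¬ Dominates G (I ∩ C) (privIR G IR A x)) ∧
          ∀ D : Set V, D ⊂ I ∩ C →
            ¬ (Dominates G D (C \ onbrSet G A) ∧
                ∀ x ∈ A \ Bset G IR A, (privIR G IR A x ∩ C).Nonempty →
                  ¬ Dominates G D (privIR G IR A x))) := by
  have hAIR : ∀ a ∈ A, a ∉ IR := by
    obtain ⟨D, _, rfl⟩ := hA
    exact fun a ha => ha.2
  have hApriv : ∀ a ∈ A, (privIR G IR A a).Nonempty := by
    obtain ⟨D, hD, rfl⟩ := hA
    intro a ha
    obtain ⟨u, hu⟩ := ((minDom_iff hIR D).1 hD).2 a ha.1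
    rw [mem_privIR_iff] at hu
    exact ⟨u, (mem_privIR_iff _ _ _ _ _).2 ⟨hu.1, ha, hu.2.2.1, fun d hd => hu.2.2.2 d hd.1⟩⟩
  -- vertices of IR outside `N(A)` are not dominated by `A`
  have hout : ∀ u ∈ IR, (u ∉ onbrSet G A ↔ ∀ a ∈ A, u ∉ cnbr G a) := by
    intro u hu
    constructor
    · intro h a ha hua
      exact h ⟨(mem_cnS _ _ _).2 ⟨a, ha, hua⟩, fun huA => hAIR u huA hu⟩
    · intro h hu'
      obtain ⟨a, ha, hua⟩ := (mem_cnS _ _ _).1 hu'.1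
      exact h a ha hua
  -- domination inside IR stays within components
  have hloc : ∀ C, IsCompOf G IR C → ∀ x ∈ IR, ∀ y ∈ C, x ∈ cnbr G y → x ∈ C := by
    intro C hC x hx y hy hxy
    rcases (mem_cn _ _ _).1 hxy with rfl | h
    · exact hy
    · exact hC.2.2.2 y hy x hx h
  rw [minDom_iff hIR]
  constructor
  · rintro ⟨hdom, hpriv⟩ C hC
    refine ⟨?_, ?_, ?_⟩
    · rintro u ⟨huC, huA⟩
      rw [hout u (hC.1 huC)] at huA
      obtain ⟨d, hd, hud⟩ := hdom u (hC.1 huC)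
      rcases hd with hd | hd
      · exact absurd hud (huA d hd)
      · exact (mem_cnS _ _ _).2 ⟨d, ⟨hd, hloc C hC d (hI hd) u huC (cn_symm hud)⟩, hud⟩
    · rintro x ⟨hxA, -⟩ - hD
      obtain ⟨u, hu⟩ := hpriv x (Or.inl hxA)
      rw [mem_privIR_iff] at hu
      obtain ⟨d, hd, hud⟩ := (mem_cnS _ _ _).1 (hD ((mem_privIR_iff G IR A x u).2
        ⟨hu.1, hxA, hu.2.2.1, fun d hd => hu.2.2.2 d (Or.inl hd)⟩))
      have := hu.2.2.2 d (Or.inr hd.1) hud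
      exact hAIR x hxA (this ▸ hI hd.1)
    · rintro D hD ⟨hD1, -⟩
      obtain ⟨d, hd, hdD⟩ := Set.exists_of_ssubset hD
      obtain ⟨u, hu⟩ := hpriv d (Or.inr hd.1)
      rw [mem_privIR_iff] at hu
      have huC : u ∈ C := hloc C hC u hu.1 d hd.2 hu.2.2.1
      have huA : u ∉ onbrSet G A := by
        rw [hout u hu.1]
        intro a ha hua
        have := hu.2.2.2 a (Or.inl ha) hua
        exact hAIR a ha (this ▸ hI hd.1)
      obtain ⟨e, he, hue⟩ := (mem_cnS _ _ _).1 (hD1 ⟨huC, huA⟩)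
      have := hu.2.2.2 e (Or.inr (hD.1 he).1) hue
      exact hdD (this ▸ he)
  · intro H
    refine ⟨?_, ?_⟩
    · intro v hv
      obtain ⟨C, hC, hvC⟩ := exists_comp G IR hv
      by_cases h : v ∈ onbrSet G A
      · obtain ⟨a, ha, hva⟩ := (mem_cnS _ _ _).1 h.1
        exact ⟨a, Or.inl ha, hva⟩
      · obtain ⟨d, hd, hvd⟩ := (mem_cnS _ _ _).1 ((H C hC).1 ⟨hvC, h⟩)
        exact ⟨d, Or.inr hd.1, hvd⟩
    · -- a private neighbor for `A` not dominated by `I` is enough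
      have fin : ∀ x ∈ A, ∀ u ∈ privIR G IR A x, ∀ C, IsCompOf G IR C → u ∈ C →
          (∀ d ∈ I ∩ C, u ∉ cnbr G d) → (privIR G IR (A ∪ I) x).Nonempty := by
        intro x hx u hu C hC huC hd
        rw [mem_privIR_iff] at hu
        refine ⟨u, (mem_privIR_iff _ _ _ _ _).2 ⟨hu.1, Or.inl hx, hu.2.2.1, ?_⟩⟩
        rintro d (hdA | hdI) hud
        · exact hu.2.2.2 d hdA hud
        · exact absurd hud (hd d ⟨hdI, hloc C hC d (hI hdI) u huC (cn_symm hud)⟩)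
      rintro x (hx | hx)
      · by_cases hB : x ∈ Bset G IR A
        · obtain ⟨-, C, hC, hCA, u, hu, huC⟩ := hB
          apply fin x hx u hu C hC huC
          intro d hd
          exfalso
          refine (H C hC).2.2 ∅ ⟨Set.empty_subset _, fun h => h hd⟩ ⟨?_, ?_⟩
          · rintro v ⟨h1, h2⟩
            exact absurd (hCA h1) h2
          · rintro y - ⟨v, hv, -⟩ h
            obtain ⟨e, he, -⟩ := (mem_cnS _ _ _).1 (h hv)
            exact he
        · obtain ⟨u, hu⟩ := hApriv x hx
          obtain ⟨C, hC, huC⟩ := exists_comp G IR hu.2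
          have hnd := (H C hC).2.1 x ⟨hx, hB⟩ ⟨u, hu, huC⟩
          obtain ⟨u', hu', hnd'⟩ := Set.not_subset.1 hnd
          obtain ⟨C', hC', huC'⟩ := exists_comp G IR hu'.2
          have aux : ∀ C, IsCompOf G IR C → ∀ u ∈ C, u ∈ privIR G IR A x →
              G.Adj x u ∧ ∃ w ∈ C, ¬ G.Adj x w := by
            intro C hC u huC hu
            constructor
            · have h := (mem_privIR_iff _ _ _ _ _).1 hu
              rcases (mem_cn _ _ _).1 h.2.2.1 with h' | h'
              · exact absurd (h' ▸ hu.2) (hAIR x hx)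
              · exact h'
            · by_contra hcon
              push Not at hcon
              apply hB
              refine ⟨hx, C, hC, fun w hw => ?_, u, hu, huC⟩
              exact ⟨(mem_cnS _ _ _).2 ⟨x, hx, (mem_cn _ _ _).2 (Or.inr (hcon w hw))⟩,
                fun h => hAIR w h (hC.1 hw)⟩
          obtain ⟨ha, w, hw, haw⟩ := aux C hC u huC hu
          obtain ⟨ha', w', hw', haw'⟩ := aux C' hC' u' huC' hu'
          have hsub := single_comp hch hP9 hIR hC hC' (hAIR x hx) huC hw ha haw huC' hw' ha' haw'
          exact fin x hx u' hu' C hC (hsub huC')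
            (fun d hd hud => hnd' ((mem_cnS _ _ _).2 ⟨d, hd, hud⟩))
      · obtain ⟨C, hC, hxC⟩ := exists_comp G IR (hI hx)
        obtain ⟨H1, H2, H3⟩ := H C hC
        have h3 := H3 ((I ∩ C) \ {x}) ⟨Set.diff_subset, fun h => (h ⟨hx, hxC⟩).2 rfl⟩
        have h4 : ¬ Dominates G ((I ∩ C) \ {x}) (C \ onbrSet G A) := by
          intro h
          refine h3 ⟨h, fun y hy hyC hD => H2 y hy hyC fun v hv => ?_⟩
          obtain ⟨d, hd, hvd⟩ := (mem_cnS _ _ _).1 (hD hv)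
          exact (mem_cnS _ _ _).2 ⟨d, hd.1, hvd⟩
        obtain ⟨u, hu, hun⟩ := Set.not_subset.1 h4
        have key : ∀ d ∈ A ∪ I, u ∈ cnbr G d → d = x := by
          rintro d (hdA | hdI) hud
          · exact absurd hud ((hout u (hC.1 hu.1)).1 hu.2 d hdA)
          · by_contra hne
            exact hun ((mem_cnS _ _ _).2
              ⟨d, ⟨⟨hdI, hloc C hC d (hI hdI) u hu.1 (cn_symm hud)⟩, hne⟩, hud⟩)
        obtain ⟨d, hd, hud⟩ := (mem_cnS _ _ _).1 (H1 hu)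
        have hdx := key d (Or.inr hd.1) hud
        subst hdx
        exact ⟨u, (mem_privIR_iff _ _ _ _ _).2 ⟨hC.1 hu.1, Or.inr hx, hud, key⟩⟩
end

section
/- Let G be a finite simple chordal graph that is P_9-free, IR an irredundant set of G, and A ⊆ RN = V(G) \ IR. Then A ∈ D_RN(G) if and only if Priv_IR(A,a) ≠ ∅ for every a ∈ A and, for every irredundant component C_i of G, there exists D_i ⊆ C_i such that D_i dominates C_i \ N(A) and D_i does not dominate Priv_IR(A,x) for any x ∈ R_i(A). -/
variable {V : Type*}

lemma mem_cnbr' (G : SimpleGraph V) (x y : V) : y ∈ cnbr G x ↔ y = x ∨ G.Adj x y := by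
  simp [cnbr]

lemma mem_cnbrSet' (G : SimpleGraph V) (X : Set V) (y : V) :
    y ∈ cnbrSet G X ↔ ∃ x ∈ X, y = x ∨ G.Adj x y := by
  simp [cnbrSet, mem_cnbr']

/-- In a chordal graph, a walk in which vertices at distance two along the walk are distinct
and nonadjacent is an induced path. -/
lemma chordal_walk (G : SimpleGraph V) (hch : Chordal G) (n : ℕ) (v : ℕ → V)
    (h1 : ∀ i, i + 1 < n → G.Adj (v i) (v (i + 1)))
    (h2 : ∀ i, i + 2 < n → v i ≠ v (i + 2) ∧ ¬ G.Adj (v i) (v (i + 2))) :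
    ∀ d, 2 ≤ d → ∀ i, i + d < n → v i ≠ v (i + d) ∧ ¬ G.Adj (v i) (v (i + d)) := by
  intro d
  induction d using Nat.strong_induction_on with
  | _ d ih =>
    intro hd i hi
    rcases Nat.eq_or_lt_of_le hd with rfl | hd3
    · exact h2 i hi
    have hne : v i ≠ v (i + d) := by
      intro he
      have hA := h1 i (by omega)
      have := (ih (d - 1) (by omega) (by omega) (i + 1) (by omega)).2
      rw [show i + 1 + (d - 1) = i + d by omega, ← he] at this
      exact this hA.symm
    refine ⟨hne, fun hadj => ?_⟩
    -- distinctness and adjacency along the cycle, for ordered pairs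
    have key : ∀ a b : ℕ, a < b → b ≤ d →
        v (i + a) ≠ v (i + b) ∧
        (G.Adj (v (i + a)) (v (i + b)) ↔ (b = a + 1 ∨ (a = 0 ∧ b = d))) := by
      intro a b hab hb
      by_cases hb1 : b = a + 1
      · subst hb1
        have := h1 (i + a) (by omega)
        exact ⟨this.ne, by simpa [add_assoc] using this⟩
      by_cases h0 : a = 0 ∧ b = d
      · obtain ⟨rfl, rfl⟩ := h0
        exact ⟨hne, by simpa using hadj⟩
      · have := ih (b - a) (by omega) (by omega) (i + a) (by omega)
        rw [show i + a + (b - a) = i + b by omega] at this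
        refine ⟨this.1, ?_⟩
        constructor
        · intro h; exact absurd h this.2
        · intro h; rcases h with h | h
          · exact absurd h hb1
          · exact absurd h h0
    suffices hs : Function.Injective (fun k : Fin (d + 1) => v (i + k.val)) ∧
        ∀ a b : Fin (d + 1), G.Adj (v (i + a.val)) (v (i + b.val)) ↔ (a = b + 1 ∨ b = a + 1) from
      hch (d + 1) (by omega) ⟨fun k : Fin (d + 1) => v (i + k.val), hs.1, hs.2⟩
    constructor
    · intro a b hab
      have ha := a.2
      have hb := b.2
      rcases lt_trichotomy a.val b.val with h | h | h
      · exact absurd hab (key _ _ h (by omega)).1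
      · exact Fin.ext h
      · exact absurd hab.symm (key _ _ h (by omega)).1
    · have succ_iff : ∀ a b : Fin (d + 1), a = b + 1 ↔
          (a.val = b.val + 1 ∨ (b.val = d ∧ a.val = 0)) := by
        intro a b
        have ha := a.2
        have hb := b.2
        rw [Fin.ext_iff, Fin.val_add_one]
        split_ifs with h
        · subst h; simp; omega
        · have : b.val ≠ d := fun h' => h (Fin.ext h')
          omega
      intro a b
      have ha := a.2
      have hb := b.2
      refine Iff.trans ?_ (or_congr (succ_iff a b) (succ_iff b a)).symm
      rcases lt_trichotomy a.val b.val with h | h | h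
      · rw [(key _ _ h (by omega)).2]; omega
      · rw [h]; simp only [SimpleGraph.irrefl, false_iff]; omega
      · rw [G.adj_comm, (key _ _ h (by omega)).2]; omega

/-- Crossing edge in a connected induced subgraph. -/
lemma crossing (G : SimpleGraph V) (C : Set V) (hC : (G.induce C).Connected) (S : Set V)
    {p y : V} (hp : p ∈ C) (hy : y ∈ C) (hpS : p ∈ S) (hyS : y ∉ S) :
    ∃ a ∈ C, ∃ b ∈ C, G.Adj a b ∧ a ∈ S ∧ b ∉ S := by
  obtain ⟨w⟩ := hC.preconnected ⟨p, hp⟩ ⟨y, hy⟩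
  obtain ⟨e, -, h1, h2⟩ := w.exists_boundary_dart {z | z.1 ∈ S} hpS hyS
  exact ⟨e.fst, e.fst.2, e.snd, e.snd.2, e.adj, h1, h2⟩

lemma comp_unique (G : SimpleGraph V) (S C C' : Set V) (h : IsCompOf G S C)
    (h' : IsCompOf G S C') {u : V} (hu : u ∈ C) (hu' : u ∈ C') : C = C' := by
  have aux : ∀ C C' : Set V, IsCompOf G S C → IsCompOf G S C' → u ∈ C → u ∈ C' → C ⊆ C' := by
    intro C C' h h' hu hu' y hy
    by_contra hyn
    obtain ⟨a, ha, b, hb, hab, haS, hbS⟩ := crossing G C h.2.2.1 C' hu hy hu' hyn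
    exact hbS (h'.2.2.2 a haS b (h.1 hb) hab)
  exact Set.Subset.antisymm (aux C C' h h' hu hu') (aux C' C h' h hu' hu)

lemma comp_exists (G : SimpleGraph V) (S : Set V) {u : V} (hu : u ∈ S) :
    ∃ C, IsCompOf G S C ∧ u ∈ C := by
  classical
  refine ⟨{v | ∃ w : G.Walk u v, ∀ t ∈ w.support, t ∈ S}, ⟨?_, ?_, ?_, ?_⟩, ?_⟩
  · rintro v ⟨w, hw⟩
    exact hw v w.end_mem_support
  · exact ⟨u, .nil, by simpa using hu⟩
  · refine SimpleGraph.induce_connected_of_patches u ⟨.nil, by simpa using hu⟩ ?_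
    rintro v ⟨w, hw⟩
    refine ⟨{t | t ∈ w.support}, ?_, w.start_mem_support, w.end_mem_support,
      (w.connected_induce_support).preconnected _ _⟩
    intro t ht
    exact ⟨w.takeUntil t ht, fun s hs => hw s (w.support_takeUntil_subset_support ht hs)⟩
  · rintro x ⟨w, hw⟩ y hy hxy
    refine ⟨w.concat hxy, ?_⟩
    intro t ht
    simp [SimpleGraph.Walk.support_concat] at ht
    rcases ht with ht | rfl
    · exact hw t ht
    · exact hy
  · exact ⟨.nil, by simpa using hu⟩

lemma IR_not_subset (G : SimpleGraph V) (IR : Set V) (hIR : IsIrredundantSet G IR)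
    {x y : V} (hx : x ∈ IR) (hy : y ∈ IR) (hne : x ≠ y) :
    ∃ z, z ∈ cnbr G x ∧ z ∉ cnbr G y := by
  rw [← Set.not_subset]
  intro h
  rcases h.eq_or_ssubset with h | h
  · exact hIR.2.2 x hx y hy hne h
  · exact hIR.2.1 y hy x h

/-- From a vertex outside `IR` having a neighbor and a nonneighbor in an irredundant component,
a path on five vertices enters the component. -/
lemma branch (G : SimpleGraph V) (IR : Set V) (hIR : IsIrredundantSet G IR)
    {x : V} (hx : x ∉ IR) {C : Set V} (hC : IsCompOf G IR C) {p y : V} (hp : p ∈ C)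
    (hxp : G.Adj x p) (hy : y ∈ C) (hxy : ¬ G.Adj x y) :
    ∃ c1 c2 c3 c4, c1 ∈ C ∧ G.Adj x c1 ∧ G.Adj c1 c2 ∧ G.Adj c2 c3 ∧ G.Adj c3 c4 ∧
      x ≠ c2 ∧ ¬ G.Adj x c2 ∧ c1 ≠ c3 ∧ ¬ G.Adj c1 c3 ∧ c2 ≠ c4 ∧ ¬ G.Adj c2 c4 := by
  obtain ⟨a, ha, b, hb, hab, haS, hbS⟩ :=
    crossing G C hC.2.2.1 {z | G.Adj x z} hp hy hxp hxy
  have hxb : x ≠ b := fun h => hx (h ▸ hC.1 hb)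
  obtain ⟨z, hz1, hz2⟩ := IR_not_subset G IR hIR (hC.1 hb) (hC.1 ha) hab.ne'
  obtain ⟨z', hz'IR, hz'⟩ := hIR.1 z
  rw [mem_cnbr'] at hz1 hz2
  push Not at hz2
  have hzb : G.Adj b z := by
    rcases hz1 with rfl | h
    · exact absurd hab hz2.2
    · exact h
  have haz' : a ∉ cnbr G z' := fun h => by
    have := hz' h
    rw [mem_cnbr'] at this
    rcases this with h | h
    · exact hz2.1 h.symm
    · exact hz2.2 h.symm
  rw [mem_cnbr'] at haz'
  push Not at haz'
  by_cases hc : z' = b ∨ G.Adj b z'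
  · have hbz' : G.Adj b z' := by
      rcases hc with rfl | h
      · exact absurd hab.symm haz'.2
      · exact h
    obtain ⟨w, hw1, hw2⟩ := IR_not_subset G IR hIR hz'IR (hC.1 hb) hbz'.ne'
    rw [mem_cnbr'] at hw1 hw2
    push Not at hw2
    have : G.Adj z' w := by
      rcases hw1 with rfl | h
      · exact absurd hbz' hw2.2
      · exact h
    exact ⟨a, b, z', w, ha, haS, hab, hbz', this, hxb, hbS, haz'.1,
      fun h => haz'.2 h.symm, hw2.1.symm, hw2.2⟩
  · push Not at hc
    have hzz' : G.Adj z z' := by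
      have := hz' ((mem_cnbr' G z' z').2 (Or.inl rfl))
      rw [mem_cnbr'] at this
      rcases this with rfl | h
      · exact absurd hzb hc.2
      · exact h
    exact ⟨a, b, z, z', ha, haS, hab, hzb, hzz', hxb, hbS, hz2.1.symm, hz2.2, hc.1.symm, hc.2⟩

lemma one_comp (G : SimpleGraph V) (hch : Chordal G) (hP9 : PkFree G 9) (IR : Set V)
    (hIR : IsIrredundantSet G IR) {x : V} (hx : x ∉ IR) {C C' : Set V} (hC : IsCompOf G IR C)
    (hC' : IsCompOf G IR C') {p y p' y' : V} (hp : p ∈ C)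
    (hxp : G.Adj x p) (hy : y ∈ C) (hxy : ¬ G.Adj x y) (hp' : p' ∈ C')
    (hxp' : G.Adj x p') (hy' : y' ∈ C') (hxy' : ¬ G.Adj x y') : C = C' := by
  by_contra hne
  obtain ⟨a1, a2, a3, a4, ha, e1, e2, e3, e4, n1, n2, n3, n4, n5, n6⟩ :=
    branch G IR hIR hx hC hp hxp hy hxy
  obtain ⟨b1, b2, b3, b4, hb, f1, f2, f3, f4, m1, m2, m3, m4, m5, m6⟩ :=
    branch G IR hIR hx hC' hp' hxp' hy' hxy'
  have hab1 : a1 ≠ b1 := fun h => hne (comp_unique G IR C C' hC hC' ha (h ▸ hb))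
  have hab2 : ¬ G.Adj a1 b1 := fun h =>
    hne (comp_unique G IR C C' hC hC' (hC.2.2.2 a1 ha b1 (hC'.1 hb) h) hb)
  let v : ℕ → V := fun i => match i with
    | 0 => a4 | 1 => a3 | 2 => a2 | 3 => a1 | 4 => x | 5 => b1 | 6 => b2 | 7 => b3 | _ => b4
  have h1 : ∀ i, i + 1 < 9 → G.Adj (v i) (v (i + 1)) := by
    intro i hi
    have : i < 8 := by omega
    interval_cases i <;> simp only [v] <;> first | assumption | (apply SimpleGraph.Adj.symm; assumption)
  have h2 : ∀ i, i + 2 < 9 → v i ≠ v (i + 2) ∧ ¬ G.Adj (v i) (v (i + 2)) := by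
    intro i hi
    have : i < 7 := by omega
    interval_cases i <;> simp only [v] <;>
      first | exact ⟨by assumption, by assumption⟩ |
        (rw [G.adj_comm, ne_comm]; exact ⟨by assumption, by assumption⟩)
  have key := chordal_walk G hch 9 v h1 h2
  have key' : ∀ a b : ℕ, a < b → b < 9 → v a ≠ v b ∧ (G.Adj (v a) (v b) ↔ a + 1 = b) := by
    intro a b hab hb
    by_cases h : a + 1 = b
    · subst h
      have := h1 a hb
      exact ⟨this.ne, by simpa using this⟩
    · have := key (b - a) (by omega) a (by omega)
      rw [show a + (b - a) = b by omega] at this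
      exact ⟨this.1, by simp [this.2, h]⟩
  refine hP9 ⟨fun k => v k.val, ?_, ?_⟩
  · intro a b hab
    rcases lt_trichotomy a.val b.val with h | h | h
    · exact absurd hab (key' _ _ h b.2).1
    · exact Fin.ext h
    · exact absurd hab.symm (key' _ _ h a.2).1
  · intro a b
    change G.Adj (v a.val) (v b.val) ↔ _
    rcases lt_trichotomy a.val b.val with h | h | h
    · rw [(key' _ _ h b.2).2]; omega
    · rw [h]; simp
    · rw [G.adj_comm, (key' _ _ h a.2).2]; omega

lemma mem_priv' (G : SimpleGraph V) (D : Set V) (x u : V) :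
    u ∈ priv G D x ↔ (x ∈ D ∧ (x = u ∨ G.Adj u x)) ∧
      ∀ d ∈ D, (d = u ∨ G.Adj u d) → d = x := by
  constructor
  · intro h
    have h : cnbr G u ∩ D = {x} := h
    have hx : x ∈ cnbr G u ∩ D := by rw [h]; rfl
    rw [Set.mem_inter_iff, mem_cnbr'] at hx
    refine ⟨⟨hx.2, hx.1⟩, fun d hd hdu => ?_⟩
    have : d ∈ cnbr G u ∩ D := ⟨(mem_cnbr' _ _ _).2 hdu, hd⟩
    rw [h] at this
    exact this
  · rintro ⟨⟨h1, h2⟩, h3⟩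
    change cnbr G u ∩ D = {x}
    ext d
    rw [Set.mem_inter_iff, mem_cnbr', Set.mem_singleton_iff]
    constructor
    · rintro ⟨h, h'⟩; exact h3 d h' h
    · rintro rfl; exact ⟨h2, h1⟩

/-- Every element of a minimal dominating set has an irredundant private neighbor. -/
lemma min_priv (G : SimpleGraph V) (IR D : Set V) (hIR : IsIrredundantSet G IR)
    (hD : IsMinDomSet G D) {a : V} (ha : a ∈ D) : (privIR G IR D a).Nonempty := by
  have h := hD.2 (D \ {a}) ⟨Set.sdiff_subset, fun h => (h ha).2 rfl⟩
  obtain ⟨u, -, hu⟩ := Set.not_subset.1 h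
  obtain ⟨x, hx, hxu⟩ := hIR.1 u
  refine ⟨x, ?_, hx⟩
  have hall : ∀ d ∈ D, (d = x ∨ G.Adj x d) → d = a := by
    intro d hd hdx
    by_contra hda
    apply hu
    have := hxu ((mem_cnbr' G x d).2 hdx)
    rw [mem_cnbr'] at this
    rw [mem_cnbrSet']
    exact ⟨d, ⟨hd, hda⟩, this.imp Eq.symm SimpleGraph.Adj.symm⟩
  have hdom := hD.1 (Set.mem_univ x)
  rw [mem_cnbrSet'] at hdom
  obtain ⟨d, hd, hdx⟩ := hdom
  have hdx' : d = x ∨ G.Adj x d := hdx.imp Eq.symm SimpleGraph.Adj.symm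
  have := hall d hd hdx'
  subst this
  exact (mem_priv' _ _ _ _).2 ⟨⟨hd, hdx'⟩, hall⟩

/-- In a `P₉`-free chordal graph, `A ∈ D_RN(G)` iff every `a ∈ A` has an
irredundant private neighbor and every irredundant component `C` has a subset `D` dominating
`C \ N(A)` without dominating `Priv_IR(A, x)` for any `x ∈ R_i(A)`. -/
theorem stmt_10 [Fintype V] (G : SimpleGraph V) (hch : Chordal G) (hP9 : PkFree G 9)
    (IR : Set V) (hIR : IsIrredundantSet G IR)
    (A : Set V) (hA : A ⊆ IRᶜ) :
    memDRN G IR A ↔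
      ((∀ a ∈ A, (privIR G IR A a).Nonempty) ∧
        ∀ C : Set V, IsCompOf G IR C →
          ∃ D ⊆ C, Dominates G D (C \ onbrSet G A) ∧
            ∀ x ∈ A \ Bset G IR A, (privIR G IR A x ∩ C).Nonempty →
              ¬ Dominates G D (privIR G IR A x)) := by
  classical
  constructor
  · rintro ⟨D, hD, hAD⟩
    have hAsub : A ⊆ D := by rw [hAD]; exact Set.inter_subset_left
    have hpp : ∀ a ∈ A, ∃ u ∈ privIR G IR A a, ∀ d ∈ D, (d = u ∨ G.Adj u d) → d = a := by
      intro a ha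
      obtain ⟨u, hu, huIR⟩ := min_priv G IR D hIR hD (hAsub ha)
      rw [mem_priv'] at hu
      exact ⟨u, ⟨(mem_priv' _ _ _ _).2 ⟨⟨ha, hu.1.2⟩, fun d hd => hu.2 d (hAsub hd)⟩, huIR⟩, hu.2⟩
    refine ⟨fun a ha => (hpp a ha).imp fun u h => h.1, fun C hC => ?_⟩
    refine ⟨D ∩ C, Set.inter_subset_right, ?_, ?_⟩
    · rintro u ⟨huC, huA⟩
      have h := hD.1 (Set.mem_univ u)
      rw [mem_cnbrSet'] at h ⊢
      obtain ⟨d, hd, hdu⟩ := h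
      have hdIR : d ∈ IR := by
        by_contra hd'
        have hdA : d ∈ A := by rw [hAD]; exact ⟨hd, hd'⟩
        exact huA ⟨(mem_cnbrSet' _ _ _).2 ⟨d, hdA, hdu⟩, fun h => hA h (hC.1 huC)⟩
      refine ⟨d, ⟨hd, ?_⟩, hdu⟩
      rcases hdu with rfl | h
      · exact huC
      · exact hC.2.2.2 u huC d hdIR h.symm
    · rintro x ⟨hxA, -⟩ - hdom
      obtain ⟨u, hu, huD⟩ := hpp x hxA
      have h := hdom hu
      rw [mem_cnbrSet'] at h
      obtain ⟨d, ⟨hd, hdC⟩, hdu⟩ := h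
      have := huD d hd (hdu.imp Eq.symm SimpleGraph.Adj.symm)
      subst this
      exact hA hxA (hC.1 hdC)
  · rintro ⟨hpriv, hcomp⟩
    choose! F hFC hFdom hFpriv using hcomp
    let D : Set V := A ∪ {v | ∃ C, IsCompOf G IR C ∧ ¬ C ⊆ onbrSet G A ∧ v ∈ F C}
    have hAsub : A ⊆ D := Set.subset_union_left
    -- `D` dominates everything
    have hdom : Dominates G D Set.univ := by
      intro v _
      obtain ⟨u, huIR, huv⟩ := hIR.1 v
      suffices h : u ∈ cnbrSet G D by
        rw [mem_cnbrSet'] at h ⊢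
        obtain ⟨d, hd, hdu⟩ := h
        have : d ∈ cnbr G v := huv ((mem_cnbr' _ _ _).2 (hdu.imp Eq.symm SimpleGraph.Adj.symm))
        rw [mem_cnbr'] at this
        exact ⟨d, hd, this.imp Eq.symm SimpleGraph.Adj.symm⟩
      obtain ⟨C, hC, huC⟩ := comp_exists G IR huIR
      rw [mem_cnbrSet']
      by_cases hu : u ∈ onbrSet G A
      · obtain ⟨d, hd, h⟩ := (mem_cnbrSet' _ _ _).1 hu.1
        exact ⟨d, hAsub hd, h⟩
      · obtain ⟨d, hd, h⟩ := (mem_cnbrSet' _ _ _).1 (hFdom C hC ⟨huC, hu⟩)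
        exact ⟨d, Or.inr ⟨C, hC, fun h => hu (h huC), hd⟩, h⟩
    -- a vertex of a component dominated by `D` from outside `A` is dominated by `F C`
    have hloc : ∀ C, IsCompOf G IR C → ∀ u ∈ C, ∀ d ∈ D, d ∉ A → (d = u ∨ G.Adj u d) →
        ¬ C ⊆ onbrSet G A ∧ d ∈ F C := by
      intro C hC u hu d hd hdA hdu
      rcases hd with hd | ⟨C', hC', hn, hdF⟩
      · exact absurd hd hdA
      have hdC : d ∈ C := by
        rcases hdu with rfl | h
        · exact hu
        · exact hC.2.2.2 u hu d (hC'.1 (hFC C' hC' hdF)) h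
      have := comp_unique G IR C C' hC hC' hdC (hFC C' hC' hdF)
      subst this
      exact ⟨hn, hdF⟩
    have hpD : ∀ a ∈ A, ∃ u, ∀ d ∈ D, (d = u ∨ G.Adj u d) → d = a := by
      intro a ha
      by_cases hB : a ∈ Bset G IR A
      · obtain ⟨-, C, hC, hCA, u, ⟨hu, huIR⟩, huC⟩ := hB
        rw [mem_priv'] at hu
        refine ⟨u, fun d hd hdu => ?_⟩
        by_cases hdA : d ∈ A
        · exact hu.2 d hdA hdu
        · exact absurd hCA (hloc C hC u huC d hd hdA hdu).1
      · have hadj : ∀ q ∈ privIR G IR A a, G.Adj a q := by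
          rintro q ⟨hq, hqIR⟩
          rcases ((mem_priv' _ _ _ _).1 hq).1.2 with rfl | h
          · exact absurd hqIR (hA ha)
          · exact h.symm
        have hnon : ∀ C, IsCompOf G IR C → (privIR G IR A a ∩ C).Nonempty →
            ∃ y ∈ C, ¬ G.Adj a y := by
          intro C hC hne
          have : ¬ C ⊆ onbrSet G A := fun h => hB ⟨ha, C, hC, h, hne⟩
          obtain ⟨y, hy, hyA⟩ := Set.not_subset.1 this
          exact ⟨y, hy, fun h => hyA ⟨(mem_cnbrSet' _ _ _).2 ⟨a, ha, Or.inr h⟩,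
            fun h' => hA h' (hC.1 hy)⟩⟩
        obtain ⟨p, hp⟩ := hpriv a ha
        obtain ⟨C, hC, hpC⟩ := comp_exists G IR hp.2
        obtain ⟨u, hu, huF⟩ := Set.not_subset.1 (hFpriv C hC a ⟨ha, hB⟩ ⟨p, hp, hpC⟩)
        obtain ⟨C', hC', huC'⟩ := comp_exists G IR hu.2
        obtain ⟨y, hy, hay⟩ := hnon C hC ⟨p, hp, hpC⟩
        obtain ⟨y', hy', hay'⟩ := hnon C' hC' ⟨u, hu, huC'⟩
        have hCC := one_comp G hch hP9 IR hIR (hA ha) hC hC' hpC (hadj p hp) hy hay huC'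
          (hadj u hu) hy' hay'
        subst hCC
        refine ⟨u, fun d hd hdu => ?_⟩
        by_cases hdA : d ∈ A
        · exact ((mem_priv' _ _ _ _).1 hu.1).2 d hdA hdu
        · exact absurd ((mem_cnbrSet' _ _ _).2 ⟨d, (hloc C hC u huC' d hd hdA hdu).2,
            hdu.imp Eq.symm SimpleGraph.Adj.symm⟩) huF
    obtain ⟨D', hD'D, hD'dom, hD'min⟩ :=
      exists_minimal_le_of_wellFoundedLT (fun X : Set V => Dominates G X Set.univ) D hdom
    refine ⟨D', ⟨hD'dom, fun E hE hEd => hE.2 (hD'min hEd hE.1)⟩, ?_⟩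
    ext v
    constructor
    · intro hv
      refine ⟨?_, hA hv⟩
      obtain ⟨u, hu⟩ := hpD v hv
      obtain ⟨d, hd, hdu⟩ := (mem_cnbrSet' _ _ _).1 (hD'dom (Set.mem_univ u))
      have := hu d (hD'D hd) (hdu.imp Eq.symm SimpleGraph.Adj.symm)
      exact this ▸ hd
    · rintro ⟨hv, hvIR⟩
      rcases hD'D hv with h | ⟨C, hC, -, h⟩
      · exact h
      · exact absurd (hC.1 (hFC C hC h)) hvIR
end
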